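/- arXiv:1606.00345 — 4 statements merged into one kernel-verified Lean document; each statement's English description precedes it below -/
import Mathlib

section
/- Let w : ℕ → ℝ be a sequence with w_n ≥ 0 for all n, let a ≥ 0, b ≥ 0, k > 0, N ∈ ℕ and T ≥ 0 with N k ≤ T. If w_n ≤ a + b k ∑_{j=1}^{n−1} ( w_j + b k ∑_{i=1}^{j} w_i ) for all 1 ≤ n ≤ N, then w_n ≤ a (1 + b(1 + bT) k)^{n−1} for all 1 ≤ n ≤ N. -/
/-!
Each inner sum `∑_{i ≤ j} w_i` with `j ≤ n - 1` is at most `S = ∑_{i ≤ n-1} w_i` because `w ≥ 0`, so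
the nested sum is at most `(n - 1) S`, and `bk(n - 1) ≤ bT`. The recursion therefore collapses to
the single-sum one `w_n ≤ a + c ∑_{j < n} w_j` with `c = b(1 + bT)k` (`nested_sum_le`). Strong
induction then gives `w_n ≤ a (1 + c)^{n-1}`, since `a (1 + c)^{n-1}` solves the single-sum
recursion with equality (`add_mul_sum_geom`).
-/

/-- The geometric sequence `a (1 + c)^{n-1}` satisfies the single-sum Grönwall recursion with
equality. -/
lemma add_mul_sum_geom (a c : ℝ) (m : ℕ) :
    a + c * ∑ j ∈ Finset.Icc 1 m, a * (1 + c) ^ (j - 1) = a * (1 + c) ^ m := by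
  induction m with
  | zero => simp
  | succ m ih =>
    rw [Finset.sum_Icc_succ_top (by omega), mul_add, ← add_assoc, ih, Nat.add_sub_cancel]
    ring

lemma nested_sum_le (w : ℕ → ℝ) (hw : ∀ n, 0 ≤ w n) (b k T : ℝ) (hb : 0 ≤ b) (hk : 0 ≤ k)
    (m : ℕ) (hm : (m : ℝ) * k ≤ T) :
    b * k * ∑ j ∈ Finset.Icc 1 m, (w j + b * k * ∑ i ∈ Finset.Icc 1 j, w i) ≤
      b * (1 + b * T) * k * ∑ j ∈ Finset.Icc 1 m, w j := by
  set S := ∑ j ∈ Finset.Icc 1 m, w j with hS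
  have hS0 : 0 ≤ S := Finset.sum_nonneg fun i _ => hw i
  have hD : ∑ j ∈ Finset.Icc 1 m, ∑ i ∈ Finset.Icc 1 j, w i ≤ m * S := by
    have := Finset.sum_le_card_nsmul (Finset.Icc 1 m) (fun j => ∑ i ∈ Finset.Icc 1 j, w i) S
      fun j hj => Finset.sum_le_sum_of_subset_of_nonneg
        (Finset.Icc_subset_Icc_right (Finset.mem_Icc.1 hj).2) fun i _ _ => hw i
    simpa using this
  rw [Finset.sum_add_distrib, ← Finset.mul_sum]
  calc _ ≤ b * k * (S + b * k * (m * S)) := by gcongr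
    _ = b * k * (S + b * (m * k) * S) := by ring
    _ ≤ b * k * (S + b * T * S) := by gcongr
    _ = _ := by ring

/-- Discrete Grönwall lemma with a nested double sum: if `Nk ≤ T` and
`w_n ≤ a + bk ∑_{j=1}^{n-1} (w_j + bk ∑_{i=1}^{j} w_i)` for `1 ≤ n ≤ N`, then
`w_n ≤ a (1 + b(1 + bT)k)^{n-1}` for `1 ≤ n ≤ N`. -/
theorem stmt_8 (w : ℕ → ℝ) (hw : ∀ n, 0 ≤ w n)
    (a b k T : ℝ) (ha : 0 ≤ a) (hb : 0 ≤ b) (hk : 0 < k) (hT : 0 ≤ T)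
    (N : ℕ) (hNk : (N : ℝ) * k ≤ T)
    (h : ∀ n, 1 ≤ n → n ≤ N →
      w n ≤ a + b * k * ∑ j ∈ Finset.Icc 1 (n - 1),
        (w j + b * k * ∑ i ∈ Finset.Icc 1 j, w i)) :
    ∀ n, 1 ≤ n → n ≤ N → w n ≤ a * (1 + b * (1 + b * T) * k) ^ (n - 1) := by
  intro n
  induction n using Nat.strong_induction_on with
  | _ n ih =>
    intro h1 hN
    have hm : ((n - 1 : ℕ) : ℝ) * k ≤ T := by
      refine le_trans ?_ hNk
      gcongr
      omega
    have hsum : ∑ j ∈ Finset.Icc 1 (n - 1), w j ≤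
        ∑ j ∈ Finset.Icc 1 (n - 1), a * (1 + b * (1 + b * T) * k) ^ (j - 1) := by
      refine Finset.sum_le_sum fun j hj => ?_
      rw [Finset.mem_Icc] at hj
      exact ih j (by omega) hj.1 (by omega)
    rw [← add_mul_sum_geom]
    refine (h n h1 hN).trans (add_le_add_right ?_ a)
    exact (nested_sum_le w hw b k T hb hk.le (n - 1) hm).trans (by gcongr)
end

section
/- Let H be a real inner product space, let b : H × H → ℝ be a symmetric bilinear form with b(v, v) ≥ 0 for all v, let k > 0 and N ∈ ℕ. Let e, v : ℕ → H be sequences with v^n = (e^n − e^{n−1})/k for all n ≥ 1, and let α, f : ℕ → ℝ with α_n ≥ 0 for all n. If ⟨(v^n − v^{n−1})/k, v^n⟩ + α_n + b(e^n, v^n) ≤ f_n for all 1 ≤ n ≤ N, then for all 1 ≤ n ≤ N: ‖v^n‖² + b(e^n, e^n) + 2k ∑_{j=1}^{n} α_j ≤ ‖v^0‖² + b(e^0, e^0) + 2k ∑_{j=1}^{n} f_j. -/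
/-!
Multiplying the hypothesis at step `n` by `2k` bounds the growth of the energy
`‖v n‖² + b (e n) (e n)` over one step, because of the polarization identities
`2⟪v n - v (n-1), v n⟫ = ‖v n‖² - ‖v (n-1)‖² + ‖v n - v (n-1)‖²` and, as
`k • v n = e n - e (n-1)`,
`2k b (e n) (v n) = b (e n) (e n) - b (e (n-1)) (e (n-1)) + k² b (v n) (v n)`.
The last term of each is nonnegative and can be dropped; the one-step bounds then telescope.
-/

open RealInnerProductSpace

/-- Abstract second-order (viscoelastic) discrete energy estimate: if
`v^n = D_t e^n` and `⟨D_t v^n, v^n⟩ + α_n + b(e^n, v^n) ≤ f_n` for `1 ≤ n ≤ N`,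
with `b` symmetric positive semidefinite and `α_n ≥ 0`, then
`‖v^n‖² + b(e^n, e^n) + 2k ∑_{j=1}^n α_j ≤ ‖v^0‖² + b(e^0, e^0) + 2k ∑_{j=1}^n f_j`. -/
theorem stmt_11 {H : Type*} [NormedAddCommGroup H] [InnerProductSpace ℝ H]
    (b : H →ₗ[ℝ] H →ₗ[ℝ] ℝ)
    (hbsymm : ∀ x y, b x y = b y x)
    (hbpos : ∀ v, 0 ≤ b v v)
    (k : ℝ) (hk : 0 < k) (N : ℕ)
    (e v : ℕ → H)
    (hv : ∀ n, 1 ≤ n → v n = k⁻¹ • (e n - e (n - 1)))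
    (α f : ℕ → ℝ) (hα : ∀ n, 0 ≤ α n)
    (h : ∀ n, 1 ≤ n → n ≤ N →
      ⟪k⁻¹ • (v n - v (n - 1)), v n⟫ + α n + b (e n) (v n) ≤ f n) :
    ∀ n, 1 ≤ n → n ≤ N →
      ‖v n‖ ^ 2 + b (e n) (e n) + 2 * k * ∑ j ∈ Finset.Icc 1 n, α j
        ≤ ‖v 0‖ ^ 2 + b (e 0) (e 0) + 2 * k * ∑ j ∈ Finset.Icc 1 n, f j := by
  -- Starting the induction at `n = 0`, where both sides agree, removes a separate base step.
  suffices H' : ∀ n, n ≤ N →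
      ‖v n‖ ^ 2 + b (e n) (e n) + 2 * k * ∑ j ∈ Finset.Icc 1 n, α j
        ≤ ‖v 0‖ ^ 2 + b (e 0) (e 0) + 2 * k * ∑ j ∈ Finset.Icc 1 n, f j from
    fun n _ hn => H' n hn
  intro n
  induction n with
  | zero => intro _; simp
  | succ n ih =>
    intro hn
    have ih := ih (by omega)
    have hstep := h (n + 1) (by omega) hn
    have hve := hv (n + 1) (by omega)
    rw [Nat.add_sub_cancel] at hstep hve
    have he : e n = e (n + 1) - k • v (n + 1) := by
      rw [hve, smul_inv_smul₀ hk.ne']; abel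
    have hb : b (e n) (e n) = b (e (n + 1)) (e (n + 1))
        - 2 * k * b (e (n + 1)) (v (n + 1)) + k ^ 2 * b (v (n + 1)) (v (n + 1)) := by
      rw [he]
      simp only [map_sub, map_smul, LinearMap.sub_apply, LinearMap.smul_apply, smul_eq_mul]
      rw [hbsymm (v (n + 1)) (e (n + 1))]
      ring
    have hbk : 0 ≤ k ^ 2 * b (v (n + 1)) (v (n + 1)) :=
      mul_nonneg (sq_nonneg k) (hbpos _)
    have hsq := norm_sub_sq_real (v (n + 1)) (v n)
    have hnn := sq_nonneg ‖v (n + 1) - v n‖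
    have hin : k * ⟪k⁻¹ • (v (n + 1) - v n), v (n + 1)⟫
        = ‖v (n + 1)‖ ^ 2 - ⟪v (n + 1), v n⟫ := by
      rw [real_inner_smul_left, mul_inv_cancel_left₀ hk.ne', inner_sub_left,
        real_inner_self_eq_norm_sq, real_inner_comm]
    have hmul := mul_le_mul_of_nonneg_left hstep hk.le
    rw [mul_add, mul_add, hin] at hmul
    rw [Finset.sum_Icc_succ_top (by omega), Finset.sum_Icc_succ_top (by omega)]
    linarith
end

section
/- Let V be a real inner product space with norm ‖·‖_V, and let ⟨·,·⟩_H be a second inner product on V with norm ‖·‖_H satisfying ‖v‖_H ≤ c_e ‖v‖_V for all v ∈ V and some c_e > 0. Let a, b : V × V → ℝ be symmetric bilinear forms and C₁ ≥ C₂ > 0 constants with a(v, v) ≥ C₂‖v‖_V² and C₂‖v‖_V² ≤ b(v, v) ≤ C₁‖v‖_V² for all v ∈ V. Let k > 0, N ∈ ℕ, T = Nk, let e, v : ℕ → V be sequences with e^0 = 0, v^0 = 0 and v^n = (e^n − e^{n−1})/k for n ≥ 1, and let γ : ℕ → ℝ be nonnegative and c₁, c₂ ≥ 0. If for all 1 ≤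 n ≤ N, ⟨(v^n − v^{n−1})/k, v^n⟩_H + a(v^n, v^n) + b(e^n, v^n) ≤ (γ_n + c₁ k)‖v^n‖_V + c₂ k ‖v^n‖_H, then there exists a constant C, depending only on C₁, C₂, c_e, c₁, c₂ and T, such that for all 1 ≤ n ≤ N: ‖v^n‖_H² + ‖e^n‖_V² + k ∑_{j=1}^{n} ‖v^j‖_V² ≤ C ( k² + k ∑_{j=1}^{n} γ_j² ). -/
/-!
This is a discrete energy estimate. Testing the scheme with `v n` and using the polarisation inequality
`q (x, x) - q (y, y) ≤ 2 q (x - y, x)`, valid for every symmetric positive semidefinite form `q`, both for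
`ipH` (with `x = v n`, `y = v (n - 1)`) and for `b` (with `x = e n`, `y = e (n - 1)`, `x - y = k • v n`),
shows that the energy `E n = ipH (v n) (v n) + b (e n) (e n)` grows by at most
`2 k ((γ n + c₁ k) ‖v n‖ + c₂ k ‖v n‖_H) - 2 k C₂ ‖v n‖²` in one step. Since `‖v n‖_H ≤ c_e ‖v n‖`,
Young's inequality absorbs the first term into half of the dissipation, up to
`(2 / C₂) k (γ n ² + M² k²)` with `M = c₁ + c₂ c_e` (`energy_step`). No Gronwall argument is needed:
summing the steps and using `n k ≤ T` gives the claim.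
-/

/-- Half of the polarisation identity `q (x, x) - q (y, y) + q (x - y, x - y) = 2 q (x - y, x)`. -/
lemma form_sub_le {V : Type*} [AddCommGroup V] [Module ℝ V] (q : V →ₗ[ℝ] V →ₗ[ℝ] ℝ)
    (hsymm : ∀ x y, q x y = q y x) (hnonneg : ∀ x, 0 ≤ q x x) (x y : V) :
    q x x - q y y ≤ 2 * q (x - y) x := by
  have h := hnonneg (x - y)
  simp only [map_sub, LinearMap.sub_apply] at h ⊢
  linarith [hsymm x y]

/-- One step of the energy estimate, in scalars: `h` and `h'` are the squared `H`-norms of the current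
and previous `v`, `B` and `B'` the values of `b` at the current and previous `e`, `p`, `α`, `β` the three
terms on the left of the tested inequality, `x = ‖v‖` and `s = ‖v‖_H`. -/
lemma energy_step {k C₂ c_e c₁ c₂ h h' B B' p α β x s g : ℝ} (hk : 0 < k) (hC₂ : 0 < C₂)
    (hc₂ : 0 ≤ c₂) (hp : h - h' ≤ 2 * (k * p)) (hβ : B - B' ≤ 2 * (k * β))
    (hα : C₂ * x ^ 2 ≤ α) (hs : s ≤ c_e * x)
    (htest : p + α + β ≤ (g + c₁ * k) * x + c₂ * k * s) :
    h + B + C₂ * (k * x ^ 2) ≤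
      h' + B' + 2 / C₂ * (k * (g ^ 2 + (c₁ + c₂ * c_e) ^ 2 * k ^ 2)) := by
  set M := c₁ + c₂ * c_e with hM
  have hs' : c₂ * k * s ≤ c₂ * k * (c_e * x) := by gcongr
  have htest' : p + α + β ≤ (g + M * k) * x := by
    rw [hM]; linarith
  have young : 2 * ((g + M * k) * x) ≤ C₂ * x ^ 2 + 2 / C₂ * (g ^ 2 + M ^ 2 * k ^ 2) := by
    have key : C₂ * x ^ 2 + 2 / C₂ * (g ^ 2 + M ^ 2 * k ^ 2) - 2 * ((g + M * k) * x)
        = ((C₂ * x - (g + M * k)) ^ 2 + (g - M * k) ^ 2) / C₂ := by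
      field_simp
      ring
    have : 0 ≤ ((C₂ * x - (g + M * k)) ^ 2 + (g - M * k) ^ 2) / C₂ := by positivity
    linarith
  have total : 2 * (p + β) + C₂ * x ^ 2 ≤ 2 / C₂ * (g ^ 2 + M ^ 2 * k ^ 2) := by linarith
  have := mul_le_mul_of_nonneg_left total hk.le
  linarith


/-- Abstract form of Lemma 3.2 of the paper. `V` is a real inner product space whose
norm plays the role of `‖·‖_V`; the second inner product `⟨·,·⟩_H` is given by the
symmetric positive-definite bilinear form `ipH`, with `‖v‖_H = √(ipH v v) ≤ c_e ‖v‖_V`.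
If the sequences `e, v` (with `e⁰ = v⁰ = 0`, `v^n = D_t e^n`) satisfy the tested
energy inequality, then
`‖v^n‖_H² + ‖e^n‖_V² + k ∑_{j=1}^n ‖v^j‖_V² ≤ C (k² + k ∑_{j=1}^n γ_j²)`,
with `C` depending only on `C₁, C₂, c_e, c₁, c₂` and `T = Nk`. -/
theorem stmt_12 {V : Type*} [NormedAddCommGroup V] [InnerProductSpace ℝ V]
    (ipH : V →ₗ[ℝ] V →ₗ[ℝ] ℝ)
    (hipH_symm : ∀ x y, ipH x y = ipH y x)
    (hipH_pos : ∀ x, x ≠ 0 → 0 < ipH x x)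
    (c_e : ℝ) (hce : 0 < c_e)
    (hHle : ∀ x, Real.sqrt (ipH x x) ≤ c_e * ‖x‖)
    (a b : V →ₗ[ℝ] V →ₗ[ℝ] ℝ)
    (ha_symm : ∀ x y, a x y = a y x)
    (hb_symm : ∀ x y, b x y = b y x)
    (C₁ C₂ : ℝ) (hC₂ : 0 < C₂) (hC₁₂ : C₂ ≤ C₁)
    (ha_coer : ∀ x, C₂ * ‖x‖ ^ 2 ≤ a x x)
    (hb_lower : ∀ x, C₂ * ‖x‖ ^ 2 ≤ b x x)
    (hb_upper : ∀ x, b x x ≤ C₁ * ‖x‖ ^ 2)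
    (c₁ c₂ : ℝ) (hc₁ : 0 ≤ c₁) (hc₂ : 0 ≤ c₂) (T : ℝ) :
    ∃ C : ℝ, 0 < C ∧
      ∀ (k : ℝ), 0 < k → ∀ (N : ℕ), (N : ℝ) * k = T →
        ∀ (e v : ℕ → V), e 0 = 0 → v 0 = 0 →
          (∀ n, 1 ≤ n → v n = k⁻¹ • (e n - e (n - 1))) →
          ∀ (γ : ℕ → ℝ), (∀ n, 0 ≤ γ n) →
            (∀ n, 1 ≤ n → n ≤ N →
              ipH (k⁻¹ • (v n - v (n - 1))) (v n) + a (v n) (v n) + b (e n) (v n)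
                ≤ (γ n + c₁ * k) * ‖v n‖ + c₂ * k * Real.sqrt (ipH (v n) (v n))) →
            ∀ n, 1 ≤ n → n ≤ N →
              ipH (v n) (v n) + ‖e n‖ ^ 2 + k * ∑ j ∈ Finset.Icc 1 n, ‖v j‖ ^ 2
                ≤ C * (k ^ 2 + k * ∑ j ∈ Finset.Icc 1 n, γ j ^ 2) := by
  set M := c₁ + c₂ * c_e with hM
  have hH0 : ∀ x, 0 ≤ ipH x x := fun x => by
    rcases eq_or_ne x 0 with rfl | hx
    · simp
    · exact (hipH_pos x hx).le
  have hb0 : ∀ x, 0 ≤ b x x := fun x => le_trans (by positivity) (hb_lower x)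
  -- The factor `1 + 1 / C₂` converts the energy, which controls `C₂ ‖e n‖²`, into the left-hand side.
  refine ⟨(1 + 1 / C₂) * (2 / C₂ * (1 + M ^ 2 * |T|)), by positivity, ?_⟩
  intro k hk N hNT e v he0 hv0 hv γ hγ htest n hn1 hnN
  have energy : ∀ m, m ≤ N →
      ipH (v m) (v m) + b (e m) (e m) + C₂ * (k * ∑ j ∈ Finset.Icc 1 m, ‖v j‖ ^ 2) ≤
        2 / C₂ * (k * ∑ j ∈ Finset.Icc 1 m, γ j ^ 2 + M ^ 2 * k ^ 2 * (m * k)) := by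
    intro m
    induction m with
    | zero => intro _; simp [he0, hv0]
    | succ m ih =>
      intro hm
      have ih := ih (by omega)
      have ht := htest (m + 1) (by omega) hm
      have hvm := hv (m + 1) (by omega)
      rw [Nat.add_sub_cancel] at ht hvm
      have he : e (m + 1) - e m = k • v (m + 1) := by
        rw [hvm, smul_inv_smul₀ hk.ne']
      have h1 := form_sub_le ipH hipH_symm hH0 (v (m + 1)) (v m)
      have h2 := form_sub_le b hb_symm hb0 (e (m + 1)) (e m)
      rw [he, map_smul, LinearMap.smul_apply, smul_eq_mul, hb_symm (v (m + 1))] at h2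
      have h1' : ipH (v (m + 1) - v m) (v (m + 1))
          = k * ipH (k⁻¹ • (v (m + 1) - v m)) (v (m + 1)) := by
        rw [map_smul, LinearMap.smul_apply, smul_eq_mul, mul_inv_cancel_left₀ hk.ne']
      rw [h1'] at h1
      have step := energy_step hk hC₂ hc₂ h1 h2 (ha_coer _) (hHle _) ht
      rw [← hM] at step
      rw [Finset.sum_Icc_succ_top (by omega), Finset.sum_Icc_succ_top (by omega)]
      push_cast
      linarith
  have hE := energy n hnN
  have hnT : (n : ℝ) * k ≤ |T| := by
    rw [← hNT]
    exact le_trans (by gcongr) (le_abs_self _)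
  set S := k * ∑ j ∈ Finset.Icc 1 n, ‖v j‖ ^ 2 with hS
  set G := k * ∑ j ∈ Finset.Icc 1 n, γ j ^ 2 with hG
  have hS0 : 0 ≤ S := by positivity
  have hG0 : 0 ≤ G := by positivity
  have hR : G + M ^ 2 * k ^ 2 * (n * k) ≤ (1 + M ^ 2 * |T|) * (k ^ 2 + G) := by
    have h1 : M ^ 2 * k ^ 2 * (n * k) ≤ M ^ 2 * k ^ 2 * |T| := by gcongr
    have h2 : 0 ≤ M ^ 2 * |T| * G := by positivity
    linarith [sq_nonneg k]
  have hL : ipH (v n) (v n) + ‖e n‖ ^ 2 + S ≤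
      (1 + 1 / C₂) * (ipH (v n) (v n) + C₂ * ‖e n‖ ^ 2 + C₂ * S) := by
    have key : (1 + 1 / C₂) * (ipH (v n) (v n) + C₂ * ‖e n‖ ^ 2 + C₂ * S)
        = ipH (v n) (v n) + ‖e n‖ ^ 2 + S
          + (ipH (v n) (v n) / C₂ + C₂ * ‖e n‖ ^ 2 + C₂ * S) := by
      field_simp
      ring
    have := hH0 (v n)
    have : 0 ≤ ipH (v n) (v n) / C₂ + C₂ * ‖e n‖ ^ 2 + C₂ * S := by positivity
    linarith
  calc _ ≤ (1 + 1 / C₂) * (ipH (v n) (v n) + C₂ * ‖e n‖ ^ 2 + C₂ * S) := hL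
    _ ≤ (1 + 1 / C₂) * (2 / C₂ * ((1 + M ^ 2 * |T|) * (k ^ 2 + G))) := by
        have hR' := mul_le_mul_of_nonneg_left hR (show 0 ≤ 2 / C₂ by positivity)
        have hbn := hb_lower (e n)
        refine mul_le_mul_of_nonneg_left ?_ (by positivity)
        linarith
    _ = _ := by ring
end

section
/- Let V be a real Hilbert space, S ⊆ V a closed subspace, k > 0, and let a, b : V × V → ℝ be bounded bilinear forms such that the form a + k·b is coercive on S, i.e. there is α > 0 with a(χ, χ) + k b(χ, χ) ≥ α‖χ‖² for all χ ∈ S. Then for every sequence U : ℕ → V and every W⁰ ∈ S there exists a unique sequence W : ℕ → V with W^0 = W⁰, W^n ∈ S for all n, and a(D_t W^n − D_t U^n, χ) + b(W^n − U^n, χ) = 0 for all χ ∈ S and all n ≥ 1, where D_t W^n = (W^n − W^{n−1})/k and D_t U^n = (U^n − U^{n−1})/k. -/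
/-!
Multiplying the defining equation at step `n` by `k` turns it into
`c(W^n, χ) = a(W^{n-1} + U^n - U^{n-1}, χ) + k b(U^n, χ)` for all `χ ∈ S`, where `c = a + k·b`
(`step_iff`). The right-hand side is a bounded functional of `χ`, and `c` is bounded and coercive
on the Hilbert space `S`, so Lax–Milgram gives a solution `W^n ∈ S`
(`exists_of_coercive_on`); recursion on `n` builds the sequence. Two solutions of one step differ by
`e ∈ S` with `c(e, e) = 0`, hence `e = 0`, and uniqueness follows by induction.
-/

/-- Lax–Milgram on a closed subspace, for unbundled bounded bilinear forms that are coercive only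
on that subspace. -/
theorem exists_of_coercive_on {V : Type*} [NormedAddCommGroup V] [InnerProductSpace ℝ V]
    [CompleteSpace V] (S : Submodule ℝ V) (hS : IsClosed (S : Set V))
    (c : V →ₗ[ℝ] V →ₗ[ℝ] ℝ) (C : ℝ) (hc : ∀ x y, |c x y| ≤ C * ‖x‖ * ‖y‖)
    (α : ℝ) (hα : 0 < α) (hcoer : ∀ χ ∈ S, α * ‖χ‖ ^ 2 ≤ c χ χ)
    (l : V →ₗ[ℝ] ℝ) (D : ℝ) (hl : ∀ x, |l x| ≤ D * ‖x‖) :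
    ∃ w ∈ S, ∀ χ ∈ S, c w χ = l χ := by
  have : CompleteSpace S := hS.completeSpace_coe
  let B : S →L[ℝ] S →L[ℝ] ℝ :=
    LinearMap.mkContinuous₂ (c.domRestrict₁₂ S S) C (fun x y => hc x y)
  have hB : IsCoercive B := by
    refine ⟨α, hα, fun u => ?_⟩
    have h := hcoer u u.2
    rw [pow_two, ← mul_assoc] at h
    exact h
  let L : S →L[ℝ] ℝ := LinearMap.mkContinuous (l.domRestrict S) D (fun x => hl x)
  let r : S := (InnerProductSpace.toDual ℝ S).symm L
  let w : S := hB.continuousLinearEquivOfBilin.symm r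
  refine ⟨w, w.2, fun χ hχ => ?_⟩
  have h1 := hB.continuousLinearEquivOfBilin_apply w ⟨χ, hχ⟩
  have h2 : inner ℝ r ⟨χ, hχ⟩ = L ⟨χ, hχ⟩ := InnerProductSpace.toDual_symm_apply
  rw [ContinuousLinearEquiv.apply_symm_apply, h2] at h1
  exact h1.symm

theorem step_iff {V : Type*} [AddCommGroup V] [Module ℝ V] {k : ℝ} (hk : 0 < k)
    (a b : V →ₗ[ℝ] V →ₗ[ℝ] ℝ) (w w' u u' χ : V) :
    a (k⁻¹ • (w - w') - k⁻¹ • (u - u')) χ + b (w - u) χ = 0 ↔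
      (a + k • b) w χ = (a (w' + u - u') + k • b u) χ := by
  simp only [map_sub, map_add, map_smul, LinearMap.sub_apply, LinearMap.add_apply,
    LinearMap.smul_apply, smul_eq_mul]
  field_simp
  constructor <;> intro h <;> linarith

/-- Well-definedness of the discrete Ritz–Volterra projection: in a real Hilbert space
`V` with closed subspace `S`, for bounded bilinear forms `a, b` such that `a + k·b` is
coercive on `S`, every sequence `U` and every initial value `W⁰ ∈ S` determine a unique
sequence `W` with `W^0 = W⁰`, `W^n ∈ S` and
`a(D_t W^n - D_t U^n, χ) + b(W^n - U^n, χ) = 0` for all `χ ∈ S` and `n ≥ 1`. -/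
theorem stmt_13 {V : Type*} [NormedAddCommGroup V] [InnerProductSpace ℝ V]
    [CompleteSpace V]
    (S : Submodule ℝ V) (hS : IsClosed (S : Set V))
    (k : ℝ) (hk : 0 < k)
    (a b : V →ₗ[ℝ] V →ₗ[ℝ] ℝ)
    (Ca Cb : ℝ)
    (ha_bdd : ∀ x y, |a x y| ≤ Ca * ‖x‖ * ‖y‖)
    (hb_bdd : ∀ x y, |b x y| ≤ Cb * ‖x‖ * ‖y‖)
    (α : ℝ) (hα : 0 < α)
    (hcoer : ∀ χ ∈ S, α * ‖χ‖ ^ 2 ≤ a χ χ + k * b χ χ)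
    (U : ℕ → V) (W0 : V) (hW0 : W0 ∈ S) :
    ∃! W : ℕ → V, W 0 = W0 ∧ (∀ n, W n ∈ S) ∧
      ∀ n, 1 ≤ n → ∀ χ ∈ S,
        a (k⁻¹ • (W n - W (n - 1)) - k⁻¹ • (U n - U (n - 1))) χ
          + b (W n - U n) χ = 0 := by
  have hex : ∀ (n : ℕ) (w' : V), ∃ w ∈ S, ∀ χ ∈ S,
      (a + k • b) w χ = (a (w' + U (n + 1) - U n) + k • b (U (n + 1))) χ := by
    intro n w'
    have hsum : ∀ x y z, |a x z + k * b y z| ≤ (Ca * ‖x‖ + k * (Cb * ‖y‖)) * ‖z‖ := by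
      intro x y z
      have h1 := abs_add_le (a x z) (k * b y z)
      rw [abs_mul, abs_of_pos hk] at h1
      have h2 := mul_le_mul_of_nonneg_left (hb_bdd y z) hk.le
      linarith [ha_bdd x z]
    refine exists_of_coercive_on S hS (a + k • b) (Ca + k * Cb) (fun x y => ?_) α hα hcoer _ _
      (fun z => hsum (w' + U (n + 1) - U n) (U (n + 1)) z)
    exact (hsum x x y).trans_eq (by ring)
  choose f hfS hf using hex
  let W : ℕ → V := fun n => Nat.rec W0 f n
  have hWS : ∀ n, W n ∈ S := by
    rintro (_ | n)
    · exact hW0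
    · exact hfS n _
  refine ⟨W, ⟨rfl, hWS, ?_⟩, ?_⟩
  · rintro (_ | n) hn χ hχ
    · omega
    · exact (step_iff hk a b _ _ _ _ _).2 (hf n (W n) χ hχ)
  · rintro W' ⟨h0, hS', hW'⟩
    funext n
    induction n with
    | zero => exact h0
    | succ n ih =>
      have hmem : W' (n + 1) - W (n + 1) ∈ S := S.sub_mem (hS' (n + 1)) (hWS (n + 1))
      have h1 := (step_iff hk a b _ _ _ _ _).1 (hW' (n + 1) (by omega) _ hmem)
      have h2 : (a + k • b) (W (n + 1)) _ = _ := hf n (W n) _ hmem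
      rw [Nat.add_sub_cancel, ih, ← h2, ← sub_eq_zero, ← LinearMap.sub_apply, ← map_sub] at h1
      have h3 : α * ‖W' (n + 1) - W (n + 1)‖ ^ 2 ≤ 0 := (hcoer _ hmem).trans_eq h1
      have h4 : ‖W' (n + 1) - W (n + 1)‖ ^ 2 = 0 :=
        le_antisymm (nonpos_of_mul_nonpos_right h3 hα) (sq_nonneg _)
      exact sub_eq_zero.1 (norm_eq_zero.1 (pow_eq_zero_iff two_ne_zero |>.1 h4))
end
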